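/- arXiv:1704.01817 — 2 statements merged into one kernel-verified Lean document; each statement's English description precedes it below -/
import Mathlib

section
/- Holomorphic Bernstein identity for the complex Jordan algebra 𝕍 = Mat(m,ℂ) (the case 𝕍 = Mat(m,ℂ) of Proposition 2.2): Let m ≥ 1 and let U be an open subset of the space of m×m complex matrices contained in {Z : det Z ≠ 0}. Let L : U → ℂ be a holomorphic function with exp(L(Z)) = det Z for all Z ∈ U (a local branch of log det). Then for every s ∈ ℂ and every Z ∈ U, det(∂)[ exp(s·L) ](Z) = s(s+1)⋯(s+m−1) · exp((s−1)·L(Z)). -/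
noncomputable section

/-- Complex partial derivative of a function of an `m×m` complex matrix variable in the
entry `(i,j)`. -/
def matPd {m : ℕ} (i j : Fin m) (f : (Fin m → Fin m → ℂ) → ℂ) : (Fin m → Fin m → ℂ) → ℂ :=
  fun Z => fderiv ℂ f Z (Pi.single i (Pi.single j 1))

/-- The operator `det(∂) = Σ_{σ∈S_m} sgn(σ) ∂^m/(∂Z_{1σ(1)}⋯∂Z_{mσ(m)})`. -/
def detDeriv {m : ℕ} (f : (Fin m → Fin m → ℂ) → ℂ) : (Fin m → Fin m → ℂ) → ℂ :=
  fun Z => ∑ σ : Equiv.Perm (Fin m),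
    ((Equiv.Perm.sign σ : ℤ) : ℂ) *
      (List.foldr (fun i g => matPd i (σ i) g) f (List.finRange m)) Z

/-!
Write `X = Z⁻¹`. A branch `L` of `log det` satisfies `∂L/∂Z_{ij} = X_{ji}`, so `f = exp (s L)`
satisfies `∂f/∂Z_{ij} = s X_{ji} f`, while `∂X_{ab}/∂Z_{ij} = -X_{ai} X_{jb}`. By induction on `k`,
every `k × k` minor of the operator matrix `(∂/∂Z_{ij})`, with rows `r` and columns `c`, multiplies
`f` by `s (s + 1) ⋯ (s + k - 1)` times the determinant of the entries `X_{c_a r_b}`. In the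
inductive step, expand the operator minor along its first row. The terms where the last derivative
hits `f` add up to `s` times the Laplace expansion of the `(k + 1) × (k + 1)` minor of `X`. Where
it hits a minor of `X`, each of the `k` columns contributes minus the expansion of that same minor
with two columns exchanged, which is once more the minor itself; hence the new factor `s + k`.
-/

open scoped ContDiff Topology

section PermSucc

/-- The permutation of `Fin (k + 1)` that sends `0` to `p` and is `e`, transported along
`p.succAbove`, on the remaining points. It indexes the terms of the Laplace expansion of a
determinant. -/
def permCons {k : ℕ} (p : Fin (k + 1)) (e : Equiv.Perm (Fin k)) : Equiv.Perm (Fin (k + 1)) :=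
  (Equiv.Perm.decomposeFin.symm (0, e)).trans p.cycleRange.symm

variable {k : ℕ} (p : Fin (k + 1)) (e : Equiv.Perm (Fin k))

lemma permCons_zero : permCons p e 0 = p := by
  simp [permCons]

lemma permCons_succ (a : Fin k) : permCons p e a.succ = p.succAbove (e a) := by
  simp [permCons]

lemma sign_permCons : Equiv.Perm.sign (permCons p e) = (-1) ^ (p : ℕ) * Equiv.Perm.sign e := by
  simp [permCons, Equiv.Perm.sign_trans, Fin.sign_cycleRange]

lemma permCons_bijective :
    Function.Bijective fun q : Fin (k + 1) × Equiv.Perm (Fin k) => permCons q.1 q.2 := by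
  refine (Fintype.bijective_iff_injective_and_card _).2 ⟨?_, ?_⟩
  · rintro ⟨p, e⟩ ⟨p', e'⟩ (h : permCons p e = permCons p' e')
    obtain rfl : p = p' := by simpa only [permCons_zero] using DFunLike.congr_fun h 0
    have he : e = e' := Equiv.ext fun a => p.succAbove_right_injective <| by
      simpa only [permCons_succ] using DFunLike.congr_fun h a.succ
    rw [he]
  · simp [Fintype.card_perm, Nat.factorial_succ]

lemma sum_sign_mul_perm_succ {R : Type*} [Ring R] (g : Equiv.Perm (Fin (k + 1)) → R) :
    ∑ τ, ((Equiv.Perm.sign τ : ℤ) : R) * g τ =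
      ∑ p : Fin (k + 1), (-1) ^ (p : ℕ) *
        ∑ e : Equiv.Perm (Fin k), ((Equiv.Perm.sign e : ℤ) : R) * g (permCons p e) := by
  rw [← permCons_bijective.sum_comp, Fintype.sum_prod_type]
  simp [sign_permCons, Finset.mul_sum, mul_assoc]

end PermSucc

section LaplaceExpansion

variable {R : Type*} [CommRing R] {k : ℕ} (A : Matrix (Fin (k + 1)) (Fin (k + 1)) R)

-- Laplace expansion, along its first column, of `A` with the columns `0` and `b.succ` exchanged.
lemma sum_mul_det_updateCol_submatrix_succAbove (b : Fin k) :
    ∑ p : Fin (k + 1), (-1) ^ (p : ℕ) * A p b.succ *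
      ((A.submatrix p.succAbove Fin.succ).updateCol b fun a => A (p.succAbove a) 0).det =
      -A.det := by
  have hdet : (A.submatrix id (Equiv.swap 0 b.succ)).det = -A.det := by
    simp [Matrix.det_permute', Equiv.Perm.sign_swap (Fin.succ_ne_zero b).symm]
  rw [← hdet, Matrix.det_succ_column_zero]
  refine Finset.sum_congr rfl fun p _ => ?_
  have hminor : (A.submatrix p.succAbove Fin.succ).updateCol b (fun a => A (p.succAbove a) 0) =
      (A.submatrix id (Equiv.swap 0 b.succ)).submatrix p.succAbove Fin.succ := by
    ext a c
    obtain rfl | hc := eq_or_ne c b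
    · simp
    · simp [Matrix.updateCol_ne hc, Equiv.swap_apply_of_ne_of_ne (Fin.succ_ne_zero c)
        ((Fin.succ_injective _).ne hc)]
  rw [hminor, Matrix.submatrix_apply, Equiv.swap_apply_left, id]

lemma sum_mul_minor_sub_updateCol_eq_add_mul_det (s : R) :
    ∑ p : Fin (k + 1), (-1) ^ (p : ℕ) *
      (s * A p 0 * (A.submatrix p.succAbove Fin.succ).det -
        ∑ b : Fin k, A p b.succ *
          ((A.submatrix p.succAbove Fin.succ).updateCol b fun a => A (p.succAbove a) 0).det) =
      (s + k) * A.det := by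
  have hminor : ∑ p : Fin (k + 1), ∑ b : Fin k, (-1) ^ (p : ℕ) * (A p b.succ *
      ((A.submatrix p.succAbove Fin.succ).updateCol b fun a => A (p.succAbove a) 0).det) =
      -(k * A.det) := by
    rw [Finset.sum_comm]
    simp_rw [← mul_assoc, sum_mul_det_updateCol_submatrix_succAbove]
    simp
  have hlaplace : ∑ p : Fin (k + 1), (-1) ^ (p : ℕ) *
      (s * A p 0 * (A.submatrix p.succAbove Fin.succ).det) = s * A.det := by
    rw [A.det_succ_column_zero, Finset.mul_sum]
    exact Finset.sum_congr rfl fun p _ => by ring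
  simp_rw [mul_sub, Finset.sum_sub_distrib, hlaplace, Finset.mul_sum, hminor]
  ring

end LaplaceExpansion

lemma sum_sum_adjugate_mul_eq_sum_det_updateCol {R n : Type*} [CommRing R] [Fintype n]
    [DecidableEq n] (A : Matrix n n R) (D : n → n → R) :
    ∑ i, ∑ j, A.adjugate j i * D i j = ∑ j, (A.updateCol j fun i => D i j).det := by
  rw [Finset.sum_comm]
  refine Finset.sum_congr rfl fun j _ => ?_
  rw [← Matrix.cramer_apply, Matrix.cramer_eq_adjugate_mulVec]
  rfl

section MatrixCalculus

variable {𝕜 E n : Type*} [NontriviallyNormedField 𝕜] [NormedAddCommGroup E] [NormedSpace 𝕜 E]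
  [Fintype n] [DecidableEq n]

theorem hasFDerivAt_matrix_det {A : E → Matrix n n 𝕜} {A' : n → n → E →L[𝕜] 𝕜} {x : E}
    (hA : ∀ i j, HasFDerivAt (fun y => A y i j) (A' i j) x) :
    HasFDerivAt (fun y => (A y).det) (∑ i, ∑ j, (A x).adjugate j i • A' i j) x := by
  have hprod := HasFDerivAt.fun_sum (u := Finset.univ) fun (σ : Equiv.Perm n) _ =>
    (HasFDerivAt.finsetProd (u := Finset.univ) fun j _ => hA (σ j) j).const_mul
      ((Equiv.Perm.sign σ : ℤ) : 𝕜)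
  simp_rw [Matrix.det_apply']
  refine hprod.congr_fderiv (ContinuousLinearMap.ext fun v => ?_)
  simp only [sum_apply, smul_apply, smul_eq_mul,
    sum_sum_adjugate_mul_eq_sum_det_updateCol (A x) fun i j => A' i j v, Matrix.det_apply',
    Finset.mul_sum]
  rw [Finset.sum_comm]
  refine Finset.sum_congr rfl fun j _ => Finset.sum_congr rfl fun σ _ => ?_
  rw [← Finset.prod_erase_mul Finset.univ _ (Finset.mem_univ j), Matrix.updateCol_self]
  congr 2
  exact Finset.prod_congr rfl fun i hi => (Matrix.updateCol_ne (Finset.ne_of_mem_erase hi)).symm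

lemma differentiableAt_matrix_inv_apply {A : E → Matrix n n 𝕜} {x : E}
    (hA : ∀ i j, DifferentiableAt 𝕜 (fun y => A y i j) x) (hx : (A x).det ≠ 0) (i j : n) :
    DifferentiableAt 𝕜 (fun y => (A y)⁻¹ i j) x := by
  have hdet : DifferentiableAt 𝕜 (fun y => (A y).det) x :=
    (hasFDerivAt_matrix_det fun i j => (hA i j).hasFDerivAt).differentiableAt
  have hrow (a b : n) :
      DifferentiableAt 𝕜 (fun y => (A y).updateRow j (Pi.single i 1) a b) x := by
    obtain rfl | ha := eq_or_ne a j
    · simp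
    · simpa only [Matrix.updateRow_ne ha] using hA a b
  simp only [Matrix.inv_def, Ring.inverse_eq_inv', Matrix.smul_apply, smul_eq_mul,
    Matrix.adjugate_apply]
  exact (hdet.fun_inv hx).fun_mul
    (hasFDerivAt_matrix_det fun a b => (hrow a b).hasFDerivAt).differentiableAt

theorem hasFDerivAt_matrix_inv_apply {A : E → Matrix n n 𝕜} {A' : n → n → E →L[𝕜] 𝕜} {x : E}
    (hA : ∀ i j, HasFDerivAt (fun y => A y i j) (A' i j) x) (hx : (A x).det ≠ 0) (i j : n) :
    HasFDerivAt (fun y => (A y)⁻¹ i j)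
      (-∑ k, ∑ l, ((A x)⁻¹ i k * (A x)⁻¹ l j) • A' k l) x := by
  have hinv (k l : n) := (differentiableAt_matrix_inv_apply (fun i j => (hA i j).differentiableAt)
    hx k l).hasFDerivAt
  have hdet : ∀ᶠ y in 𝓝 x, (A y).det ≠ 0 :=
    (hasFDerivAt_matrix_det hA).continuousAt.eventually_ne hx
  refine (hinv i j).congr_fderiv (ContinuousLinearMap.ext fun v => ?_)
  let D : Matrix n n 𝕜 := .of fun k l => A' k l v
  let B : Matrix n n 𝕜 := .of fun k l => fderiv 𝕜 (fun y => (A y)⁻¹ k l) x v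
  have hleibniz : A x * B + D * (A x)⁻¹ = 0 := by
    ext k l
    have hmul := HasFDerivAt.fun_sum (u := Finset.univ) fun r _ => (hA k r).fun_mul (hinv r l)
    have hone : (fun y => ∑ r, A y k r * (A y)⁻¹ r l) =ᶠ[𝓝 x]
        fun _ => (1 : Matrix n n 𝕜) k l := by
      filter_upwards [hdet] with y hy
      rw [← (A y).mul_nonsing_inv hy.isUnit, Matrix.mul_apply]
    have hzero := DFunLike.congr_fun
      (hmul.unique ((hasFDerivAt_const _ x).congr_of_eventuallyEq hone)) v
    simpa [D, B, Matrix.mul_apply, Finset.sum_add_distrib, mul_comm] using hzero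
  have hB : B = -((A x)⁻¹ * D * (A x)⁻¹) := by
    rw [← (A x).nonsing_inv_mul_cancel_left B hx.isUnit, eq_neg_of_add_eq_zero_left hleibniz,
      Matrix.mul_neg, Matrix.mul_assoc]
  calc B i j = -((A x)⁻¹ * D * (A x)⁻¹) i j := by rw [hB, Matrix.neg_apply]
    _ = _ := by
      simp only [Matrix.mul_apply, Finset.sum_mul, neg_apply, sum_apply, smul_apply, smul_eq_mul]
      rw [Finset.sum_comm]
      simp only [D, Matrix.of_apply, mul_right_comm]

lemma contDiff_matrix_det {A : E → Matrix n n 𝕜} {N : WithTop ℕ∞}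
    (hA : ∀ i j, ContDiff 𝕜 N fun y => A y i j) : ContDiff 𝕜 N fun y => (A y).det := by
  simp_rw [Matrix.det_apply']
  exact ContDiff.sum fun σ _ => contDiff_const.mul (contDiff_prod fun i _ => hA _ _)

end MatrixCalculus

-- Near `x`, the branch `L` is `L x` plus the principal logarithm of `g / g x`.
theorem contDiffAt_of_cexp_eventuallyEq {E : Type*} [NormedAddCommGroup E] [NormedSpace ℂ E]
    {L g : E → ℂ} {x : E} {N : WithTop ℕ∞} (hg : ContDiffAt ℂ N g x) (hL : ContinuousAt L x)
    (h : ∀ᶠ y in 𝓝 x, Complex.exp (L y) = g y) :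
    ContDiffAt ℂ N L x := by
  have hgx : g x ≠ 0 := h.self_of_nhds ▸ Complex.exp_ne_zero _
  have him : ∀ᶠ y in 𝓝 x, (L y - L x).im ∈ Set.Ioo (-Real.pi) Real.pi :=
    (Complex.continuous_im.continuousAt.comp (hL.sub continuousAt_const)).eventually_mem
      (Ioo_mem_nhds (by simp [Real.pi_pos]) (by simp [Real.pi_pos]))
  have hlog : L =ᶠ[𝓝 x] fun y => L x + Complex.log (g y / g x) := by
    filter_upwards [h, him] with y hy hyim
    rw [← hy, ← h.self_of_nhds, ← Complex.exp_sub, Complex.log_exp hyim.1 hyim.2.le]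
    ring
  refine ContDiffAt.congr_of_eventuallyEq (contDiffAt_const.add ?_) hlog
  exact (Complex.contDiffAt_log (by simp [hgx])).comp x (hg.div_const (g x))

section MatPd

variable {m k : ℕ} {f g : (Fin m → Fin m → ℂ) → ℂ} {Z : Fin m → Fin m → ℂ} {i j : Fin m}

lemma matPd_eq_of_hasFDerivAt {f' : (Fin m → Fin m → ℂ) →L[ℂ] ℂ} (hf : HasFDerivAt f f' Z) :
    matPd i j f Z = f' (Pi.single i (Pi.single j 1)) := by
  rw [matPd, hf.fderiv]

lemma matPd_congr (h : f =ᶠ[𝓝 Z] g) : matPd i j f Z = matPd i j g Z := by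
  rw [matPd, matPd, h.fderiv_eq]

lemma matPd_const_mul (hf : DifferentiableAt ℂ f Z) (c : ℂ) :
    matPd i j (fun W => c * f W) Z = c * matPd i j f Z :=
  matPd_eq_of_hasFDerivAt (hf.hasFDerivAt.const_mul c)

lemma matPd_mul (hf : DifferentiableAt ℂ f Z) (hg : DifferentiableAt ℂ g Z) :
    matPd i j (fun W => f W * g W) Z = f Z * matPd i j g Z + g Z * matPd i j f Z :=
  matPd_eq_of_hasFDerivAt (hf.hasFDerivAt.fun_mul hg.hasFDerivAt)

lemma matPd_sum {ι : Type*} {u : Finset ι} {F : ι → (Fin m → Fin m → ℂ) → ℂ}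
    (hF : ∀ a ∈ u, DifferentiableAt ℂ (F a) Z) :
    matPd i j (fun W => ∑ a ∈ u, F a W) Z = ∑ a ∈ u, matPd i j (F a) Z := by
  rw [matPd_eq_of_hasFDerivAt (HasFDerivAt.fun_sum fun a ha => (hF a ha).hasFDerivAt), sum_apply]
  rfl

lemma matPd_cexp (hf : DifferentiableAt ℂ f Z) :
    matPd i j (fun W => Complex.exp (f W)) Z = Complex.exp (f Z) * matPd i j f Z :=
  matPd_eq_of_hasFDerivAt hf.hasFDerivAt.cexp

lemma contDiffAt_matPd (hf : ContDiffAt ℂ ∞ f Z) : ContDiffAt ℂ ∞ (matPd i j f) Z :=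
  (hf.fderiv_right le_rfl).clm_apply contDiffAt_const

lemma hasFDerivAt_matrix_entry (a b : Fin m) (Z : Fin m → Fin m → ℂ) :
    HasFDerivAt (fun W : Fin m → Fin m → ℂ => Matrix.of W a b)
      ((ContinuousLinearMap.proj (R := ℂ) (φ := fun _ : Fin m => ℂ) b).comp
        (ContinuousLinearMap.proj (φ := fun _ : Fin m => Fin m → ℂ) a)) Z :=
  ((ContinuousLinearMap.proj (R := ℂ) (φ := fun _ : Fin m => ℂ) b).comp
    (ContinuousLinearMap.proj (φ := fun _ : Fin m => Fin m → ℂ) a)).hasFDerivAt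

lemma matPd_matrix_det :
    matPd i j (fun W => (Matrix.of W).det) Z = (Matrix.of Z).adjugate j i := by
  rw [matPd_eq_of_hasFDerivAt (hasFDerivAt_matrix_det fun a b => hasFDerivAt_matrix_entry a b Z)]
  simp [Pi.single_apply, apply_ite]

lemma matPd_matrix_inv_apply (hZ : (Matrix.of Z).det ≠ 0) (a b : Fin m) :
    matPd i j (fun W => (Matrix.of W)⁻¹ a b) Z =
      -((Matrix.of Z)⁻¹ a i * (Matrix.of Z)⁻¹ j b) := by
  rw [matPd_eq_of_hasFDerivAt
    (hasFDerivAt_matrix_inv_apply (fun a b => hasFDerivAt_matrix_entry a b Z) hZ a b)]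
  simp [Pi.single_apply, apply_ite]

lemma hasFDerivAt_det_inv_submatrix (hZ : (Matrix.of Z).det ≠ 0) (r c : Fin k → Fin m) :
    HasFDerivAt (fun W => ((Matrix.of W)⁻¹.submatrix c r).det)
      (∑ a, ∑ b, ((Matrix.of Z)⁻¹.submatrix c r).adjugate b a •
        fderiv ℂ (fun W => (Matrix.of W)⁻¹ (c a) (r b)) Z) Z :=
  hasFDerivAt_matrix_det fun a b => (differentiableAt_matrix_inv_apply
    (fun i j => (hasFDerivAt_matrix_entry i j Z).differentiableAt) hZ (c a) (r b)).hasFDerivAt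

lemma matPd_det_inv_submatrix (hZ : (Matrix.of Z).det ≠ 0) (r c : Fin k → Fin m) :
    matPd i j (fun W => ((Matrix.of W)⁻¹.submatrix c r).det) Z =
      -∑ b, (Matrix.of Z)⁻¹ j (r b) *
        (((Matrix.of Z)⁻¹.submatrix c r).updateCol b fun a => (Matrix.of Z)⁻¹ (c a) i).det := by
  calc
    matPd i j (fun W => ((Matrix.of W)⁻¹.submatrix c r).det) Z =
        ∑ a, ∑ b, ((Matrix.of Z)⁻¹.submatrix c r).adjugate b a *
          matPd i j (fun W => (Matrix.of W)⁻¹ (c a) (r b)) Z := by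
      rw [matPd_eq_of_hasFDerivAt (hasFDerivAt_det_inv_submatrix hZ r c)]
      simp only [sum_apply, smul_apply, smul_eq_mul, matPd]
    _ = ∑ b, (((Matrix.of Z)⁻¹.submatrix c r).updateCol b
          ((-(Matrix.of Z)⁻¹ j (r b)) • fun a => (Matrix.of Z)⁻¹ (c a) i)).det := by
      simp only [matPd_matrix_inv_apply hZ]
      refine Eq.trans ?_ (sum_sum_adjugate_mul_eq_sum_det_updateCol _
        fun a b => -(Matrix.of Z)⁻¹ j (r b) * (Matrix.of Z)⁻¹ (c a) i)
      simp only [neg_mul, mul_comm ((Matrix.of Z)⁻¹ j _)]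
    _ = _ := by
      simp only [Matrix.det_updateCol_smul, neg_mul, Finset.sum_neg_distrib]

lemma matPd_log_det {L : (Fin m → Fin m → ℂ) → ℂ} (hL : DifferentiableAt ℂ L Z)
    (h : ∀ᶠ W in 𝓝 Z, Complex.exp (L W) = (Matrix.of W).det) :
    matPd i j L Z = (Matrix.of Z)⁻¹ j i := by
  have hdet : (Matrix.of Z).det ≠ 0 := h.self_of_nhds ▸ Complex.exp_ne_zero _
  have hexp : (Matrix.of Z).det * matPd i j L Z = (Matrix.of Z).adjugate j i := by
    rw [← h.self_of_nhds, ← matPd_cexp hL, matPd_congr h, matPd_matrix_det]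
  rw [Matrix.inv_def, Matrix.smul_apply, Ring.inverse_eq_inv', smul_eq_mul, ← hexp,
    inv_mul_cancel_left₀ hdet]

end MatPd

section MinorDeriv

variable {m k : ℕ} {f : (Fin m → Fin m → ℂ) → ℂ} {Z : Fin m → Fin m → ℂ}

/-- The iterated partial derivative `∂/∂Z_{r₀c₀} ⋯ ∂/∂Z_{r_{k-1}c_{k-1}}` of `f`, the operator of
index `0` being applied last. -/
def iteratedMatPd (r c : Fin k → Fin m) (f : (Fin m → Fin m → ℂ) → ℂ) :
    (Fin m → Fin m → ℂ) → ℂ :=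
  (List.finRange k).foldr (fun a g => matPd (r a) (c a) g) f

/-- The minor of the operator matrix `(∂/∂Z_{ij})` with rows `r` and columns `c`, applied to `f`;
it is `det(∂)` for `r = c = id`. -/
def minorDeriv (r c : Fin k → Fin m) (f : (Fin m → Fin m → ℂ) → ℂ) :
    (Fin m → Fin m → ℂ) → ℂ :=
  fun Z => ∑ τ : Equiv.Perm (Fin k), ((Equiv.Perm.sign τ : ℤ) : ℂ) * iteratedMatPd r (c ∘ τ) f Z

lemma detDeriv_eq_minorDeriv : detDeriv f = minorDeriv id id f :=
  rfl

lemma iteratedMatPd_succ (r c : Fin (k + 1) → Fin m) :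
    iteratedMatPd r c f = matPd (r 0) (c 0) (iteratedMatPd (r ∘ Fin.succ) (c ∘ Fin.succ) f) := by
  simp [iteratedMatPd, List.finRange_succ, List.foldr_map]

lemma contDiffAt_iteratedMatPd (hf : ContDiffAt ℂ ∞ f Z) (r c : Fin k → Fin m) :
    ContDiffAt ℂ ∞ (iteratedMatPd r c f) Z := by
  induction k with
  | zero => simpa [iteratedMatPd] using hf
  | succ k ih =>
    rw [iteratedMatPd_succ]
    exact contDiffAt_matPd (ih _ _)

lemma minorDeriv_zero (r c : Fin 0 → Fin m) : minorDeriv r c f = f := by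
  ext Z
  simp [minorDeriv, iteratedMatPd]

lemma minorDeriv_succ (hf : ContDiffAt ℂ ∞ f Z) (r c : Fin (k + 1) → Fin m) :
    minorDeriv r c f Z = ∑ p : Fin (k + 1), (-1) ^ (p : ℕ) *
      matPd (r 0) (c p) (minorDeriv (r ∘ Fin.succ) (c ∘ p.succAbove) f) Z := by
  have hdiff (r c : Fin k → Fin m) : DifferentiableAt ℂ (iteratedMatPd r c f) Z :=
    (contDiffAt_iteratedMatPd hf r c).differentiableAt (by simp)
  have hcomp (p : Fin (k + 1)) (e : Equiv.Perm (Fin k)) :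
      (c ∘ permCons p e) ∘ Fin.succ = (c ∘ p.succAbove) ∘ e :=
    funext fun a => congrArg c (permCons_succ p e a)
  rw [minorDeriv, sum_sign_mul_perm_succ]
  refine Finset.sum_congr rfl fun p _ => ?_
  simp only [iteratedMatPd_succ, hcomp, Function.comp_apply (f := c), permCons_zero]
  unfold minorDeriv
  rw [matPd_sum fun e _ => (hdiff _ _).const_mul _]
  simp only [matPd_const_mul (hdiff _ _)]

theorem minorDeriv_eq_mul_det_inv_submatrix {U : Set (Fin m → Fin m → ℂ)} (hU : IsOpen U)
    (hUinv : ∀ W ∈ U, (Matrix.of W).det ≠ 0) (hf : ∀ W ∈ U, ContDiffAt ℂ ∞ f W) {s : ℂ}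
    (hfd : ∀ W ∈ U, ∀ i j, matPd i j f W = s * (Matrix.of W)⁻¹ j i * f W)
    (r c : Fin k → Fin m) (hZ : Z ∈ U) :
    minorDeriv r c f Z =
      (∏ q : Fin k, (s + (q : ℕ))) * (f Z * ((Matrix.of Z)⁻¹.submatrix c r).det) := by
  induction k generalizing Z with
  | zero => simp [minorDeriv_zero]
  | succ k ih =>
    let A := (Matrix.of Z)⁻¹.submatrix c r
    have hfZ : DifferentiableAt ℂ f Z := (hf Z hZ).differentiableAt (by simp)
    have hterm (p : Fin (k + 1)) :
        matPd (r 0) (c p) (minorDeriv (r ∘ Fin.succ) (c ∘ p.succAbove) f) Z =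
          (∏ q : Fin k, (s + (q : ℕ))) * f Z *
            (s * A p 0 * (A.submatrix p.succAbove Fin.succ).det - ∑ b : Fin k, A p b.succ *
              ((A.submatrix p.succAbove Fin.succ).updateCol b fun a =>
                A (p.succAbove a) 0).det) := by
      have hminor := hasFDerivAt_det_inv_submatrix (hUinv Z hZ) (r ∘ Fin.succ) (c ∘ p.succAbove)
      rw [matPd_congr (Filter.eventually_of_mem (hU.mem_nhds hZ) fun W => ih _ _),
        matPd_const_mul (hfZ.fun_mul hminor.differentiableAt),
        matPd_mul hfZ hminor.differentiableAt, matPd_det_inv_submatrix (hUinv Z hZ), hfd Z hZ]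
      simp only [A, Matrix.submatrix_apply, Matrix.submatrix_submatrix, Function.comp_apply]
      ring
    calc
      minorDeriv r c f Z = (∏ q : Fin k, (s + (q : ℕ))) * f Z * ((s + k) * A.det) := by
        rw [minorDeriv_succ (hf Z hZ), ← sum_mul_minor_sub_updateCol_eq_add_mul_det, Finset.mul_sum]
        simp only [hterm, mul_left_comm]
      _ = (∏ q : Fin (k + 1), (s + (q : ℕ))) * (f Z * A.det) := by
        rw [Fin.prod_univ_castSucc]
        simp only [Fin.val_castSucc, Fin.val_last]
        ring

end MinorDeriv

theorem bernstein_identity_matrix_holomorphic_general (m : ℕ)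
    (U : Set (Fin m → Fin m → ℂ)) (hU : IsOpen U)
    (L : (Fin m → Fin m → ℂ) → ℂ) (hL : ContinuousOn L U)
    (hLlog : ∀ Z ∈ U, Complex.exp (L Z) = (Matrix.of Z).det)
    (s : ℂ) (Z : Fin m → Fin m → ℂ) (hZ : Z ∈ U) :
    detDeriv (fun W => Complex.exp (s * L W)) Z
      = (∏ k : Fin m, (s + (k : ℕ))) * Complex.exp ((s - 1) * L Z) := by
  have hlog (W) (hW : W ∈ U) : ∀ᶠ V in 𝓝 W, Complex.exp (L V) = (Matrix.of V).det :=
    Filter.eventually_of_mem (hU.mem_nhds hW) hLlog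
  have hUinv (W) (hW : W ∈ U) : (Matrix.of W).det ≠ 0 := hLlog W hW ▸ Complex.exp_ne_zero _
  have hsmooth (W) (hW : W ∈ U) : ContDiffAt ℂ ∞ L W :=
    contDiffAt_of_cexp_eventuallyEq
      (contDiff_matrix_det fun i j => contDiff_apply_apply ℂ ℂ i j).contDiffAt
      (hL.continuousAt (hU.mem_nhds hW)) (hlog W hW)
  have hf (W) (hW : W ∈ U) : ContDiffAt ℂ ∞ (fun V => Complex.exp (s * L V)) W :=
    (contDiffAt_const.mul (hsmooth W hW)).cexp
  have hfd (W) (hW : W ∈ U) (i j : Fin m) : matPd i j (fun V => Complex.exp (s * L V)) W =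
      s * (Matrix.of W)⁻¹ j i * Complex.exp (s * L W) := by
    have hLW : DifferentiableAt ℂ L W := (hsmooth W hW).differentiableAt (by simp)
    rw [matPd_cexp (hLW.const_mul s), matPd_const_mul hLW, matPd_log_det hLW (hlog W hW), mul_comm]
  rw [detDeriv_eq_minorDeriv, minorDeriv_eq_mul_det_inv_submatrix hU hUinv hf hfd id id hZ,
    Matrix.submatrix_id_id, Matrix.det_nonsing_inv, Ring.inverse_eq_inv', ← hLlog Z hZ,
    ← Complex.exp_neg, ← Complex.exp_add, ← sub_eq_add_neg, sub_one_mul]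

/-- Holomorphic Bernstein identity for `𝕍 = Mat(m,ℂ)`: if `L` is a holomorphic branch of
`log det` on an open set `U` of invertible matrices, then
`det(∂)[exp(s·L)] = s(s+1)⋯(s+m−1)·exp((s−1)·L)` on `U`. -/
theorem bernstein_identity_matrix_holomorphic (m : ℕ) (hm : 1 ≤ m)
    (U : Set (Fin m → Fin m → ℂ)) (hU : IsOpen U)
    (hUinv : ∀ Z ∈ U, (Matrix.of Z).det ≠ 0)
    (L : (Fin m → Fin m → ℂ) → ℂ) (hL : DifferentiableOn ℂ L U)
    (hLlog : ∀ Z ∈ U, Complex.exp (L Z) = (Matrix.of Z).det)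
    (s : ℂ) (Z : Fin m → Fin m → ℂ) (hZ : Z ∈ U) :
    detDeriv (fun W => Complex.exp (s * L W)) Z
      = (∏ k : Fin m, (s + (k : ℕ))) * Complex.exp ((s - 1) * L Z) := by
  exact bernstein_identity_matrix_holomorphic_general m U hU L hL.continuousOn hLlog s Z hZ
end
end

section
/- Local zeta functional equation for the sign character in dimension one (the case V = ℝ, r = 1, d = 1 of Theorem 4.3, restricted to the strip where both zeta integrals converge absolutely): Let f : ℝ → ℂ be a Schwartz function and let s ∈ ℂ with −1 < Re(s) < 0. Then both integrals below converge absolutely and ∫_{ℝ} 𝓕f(ξ) · sign(ξ) · |ξ|^{s} dξ = −i · π^{−s−1/2} · ( Γ(s/2 + 1) / Γ((1−s)/2) ) · ∫_{ℝ} f(x) · sign(x) · |x|^{−s−1} dx. -/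
noncomputable section

open MeasureTheory

/-- The Fourier transform `𝓕f(ξ) = ∫ e^{−2πi x ξ} f(x) dx` on `ℝ`. -/
def fourierTr (f : ℝ → ℂ) (ξ : ℝ) : ℂ :=
  ∫ x : ℝ, Complex.exp (-2 * Real.pi * Complex.I * (x : ℂ) * (ξ : ℂ)) * f x

/-!
Both zeta integrals are read off from the odd Gaussian `x e^{-π t x²}`. Its Mellin transform in `t`
at `a` is `π^{-a} Γ(a) sign(x) |x|^{1-2a}`, so integrating `f` against the Gaussian and taking the
Mellin transform in `t` produces the zeta integral of `f`. On the other hand the Gaussian is, up to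
the factor `-i t^{-3/2}` and the change `t ↦ 1/t`, its own Fourier transform, so the
self-adjointness of `𝓕` relates the Mellin transform of `𝓕 f` at `a` to that of `f` at `3/2 - a`;
take `a = (1-s)/2`.
-/

open Complex Set
open scoped FourierTransform ENNReal

section Fourier

variable {V E : Type*} [NormedAddCommGroup V] [InnerProductSpace ℝ V] [FiniteDimensional ℝ V]
  [MeasurableSpace V] [BorelSpace V] [NormedAddCommGroup E] [NormedSpace ℂ E]

theorem memLp_top_fourier {f : V → E} (hf : Integrable f) : MemLp (𝓕 f) ∞ :=
  memLp_top_of_bound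
    (VectorFourier.fourierIntegral_continuous Real.continuous_fourierChar
      continuous_inner hf).aestronglyMeasurable
    (∫ x, ‖f x‖)
    (.of_forall fun ξ =>
      VectorFourier.norm_fourierIntegral_le_integral_norm _ _ (innerₗ V) f ξ)

variable [CompleteSpace E]

theorem integral_fourier_smul_eq_integral_smul_fourier {f : V → ℂ} {g : V → E}
    (hf : Integrable f) (hg : Integrable g) :
    ∫ ξ, 𝓕 f ξ • g ξ = ∫ x, f x • 𝓕 g x := by
  simpa using! VectorFourier.integral_fourierIntegral_smul_eq_flip (L := innerₗ V)
    Real.continuous_fourierChar continuous_inner hf hg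

theorem fourierInv_fourier_ae_eq {f : V → E} (hf : Integrable f) (h𝓕f : Integrable (𝓕 f)) :
    𝓕⁻ (𝓕 f) =ᵐ[volume] f := by
  have h_loc : LocallyIntegrable (𝓕⁻ (𝓕 f)) := by
    rw [Real.fourierInv_eq_fourier_comp_neg]
    exact (memLp_top_fourier h𝓕f.comp_neg).locallyIntegrable le_top
  refine ae_eq_of_integral_contDiff_smul_eq h_loc hf.locallyIntegrable fun φ hφ hφ_supp => ?_
  let g : SchwartzMap V ℂ := (hφ_supp.comp_left (g := ((↑) : ℝ → ℂ)) rfl).toSchwartzMap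
    (ofRealCLM.contDiff.comp hφ)
  have hg (x : V) : g x = φ x := rfl
  suffices ∫ x, g x • 𝓕⁻ (𝓕 f) x = ∫ x, g x • f x by
    simpa only [hg, coe_smul] using this
  have hg_neg : Integrable fun x => g (-x) := g.integrable.comp_neg
  calc ∫ x, g x • 𝓕⁻ (𝓕 f) x
      = ∫ x, g (-x) • 𝓕 (𝓕 f) x := by
        rw [← integral_neg_eq_self]
        simp [Real.fourierInv_eq_fourier_neg]
    _ = ∫ ξ, 𝓕⁻ g ξ • 𝓕 f ξ := by
        rw [← integral_fourier_smul_eq_integral_smul_fourier hg_neg h𝓕f,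
          SchwartzMap.fourierInv_coe, Real.fourierInv_eq_fourier_comp_neg]
    _ = ∫ x, 𝓕 (𝓕⁻ g) x • f x := by
        rw [← integral_fourier_smul_eq_integral_smul_fourier (𝓕⁻ g).integrable hf,
          SchwartzMap.fourier_coe]
    _ = ∫ x, g x • f x := by
        rw [FourierTransform.fourier_fourierInv_eq]

theorem memLp_top_of_integrable_fourier {f : V → E} (hf : Integrable f)
    (h𝓕f : Integrable (𝓕 f)) : MemLp f ∞ := by
  refine MemLp.ae_eq (fourierInv_fourier_ae_eq hf h𝓕f) ?_
  rw [Real.fourierInv_eq_fourier_comp_neg]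
  exact memLp_top_fourier h𝓕f.comp_neg

end Fourier

/-- The quasi-character `sign(x) |x|^s` of `ℝˣ`, extended by zero to `ℝ`. The zeta integral of `f`
with respect to the sign character is `∫ x, signCpow s x • f x`. -/
def signCpow (s : ℂ) (x : ℝ) : ℂ :=
  Real.sign x * ((|x| : ℝ) : ℂ) ^ s

@[simp]
theorem signCpow_zero_right (s : ℂ) : signCpow s 0 = 0 := by
  simp [signCpow]

theorem norm_signCpow (s : ℂ) {x : ℝ} (hx : x ≠ 0) : ‖signCpow s x‖ = |x| ^ s.re := by
  have h_sign : ‖(Real.sign x : ℂ)‖ = 1 := by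
    rcases Real.sign_apply_eq_of_ne_zero x hx with h | h <;> simp [h]
  rw [signCpow, norm_mul, h_sign, one_mul, norm_cpow_eq_rpow_re_of_pos (abs_pos.2 hx)]

theorem measurable_signCpow (s : ℂ) : Measurable (signCpow s) := by
  have h_sign : Measurable Real.sign :=
    measurable_const.ite measurableSet_Iio (measurable_const.ite measurableSet_Ioi measurable_const)
  unfold signCpow
  fun_prop

theorem locallyIntegrable_signCpow {s : ℂ} (hs : -1 < s.re) : LocallyIntegrable (signCpow s) := by
  refine locallyIntegrable_of_norm_le_rpow (C := 1) (α := -s.re) (by simp)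
    (by simpa using neg_lt.1 hs) ?_ (measurable_signCpow s).aestronglyMeasurable
  filter_upwards [volume.ae_ne 0] with x hx
  simp [norm_signCpow s hx]

section Zeta

variable {E : Type*} [NormedAddCommGroup E] [NormedSpace ℂ E]

theorem integrable_signCpow_smul {f : ℝ → E} {s : ℂ} (hf : Integrable f) (hf_top : MemLp f ∞)
    (h₁ : -1 < s.re) (h₂ : s.re ≤ 0) : Integrable fun x => signCpow s x • f x := by
  have h_near : IntegrableOn (fun x => signCpow s x • f x) (Icc (-1) 1) :=
    ((locallyIntegrable_signCpow h₁).integrableOn_isCompact isCompact_Icc).smul_of_top_left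
      (hf_top.restrict _)
  have h_far : IntegrableOn (fun x => signCpow s x • f x) (Icc (-1) 1)ᶜ := by
    refine hf.integrableOn.bdd_smul 1 (measurable_signCpow s).aestronglyMeasurable ?_
    filter_upwards [ae_restrict_mem measurableSet_Icc.compl] with x hx
    have hx : 1 < |x| := by rwa [mem_compl_iff, mem_Icc, ← abs_le, not_le] at hx
    rw [norm_signCpow s (abs_pos.1 (one_pos.trans hx))]
    exact Real.rpow_le_one_of_one_le_of_nonpos hx.le h₂
  rw [← integrableOn_univ, ← union_compl_self (Icc (-1 : ℝ) 1)]
  exact h_near.union h_far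

/-- The odd Gaussian `x e^{-π b x²}`, the archimedean test function for the sign character. -/
def oddGaussian (b : ℂ) (x : ℝ) : ℂ :=
  x * cexp (-Real.pi * b * x ^ 2)

theorem integrable_oddGaussian {b : ℂ} (hb : 0 < b.re) : Integrable (oddGaussian b) := by
  have hb' : 0 < (Real.pi * b).re := by simpa using mul_pos Real.pi_pos hb
  refine (integrable_mul_cexp_neg_mul_sq hb').congr (.of_forall fun x => ?_)
  simp only [oddGaussian, neg_mul]

theorem fourier_oddGaussian {b : ℂ} (hb : 0 < b.re) :
    𝓕 (oddGaussian b) = fun ξ => -I * b ^ (-(3 / 2) : ℂ) * oddGaussian b⁻¹ ξ := by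
  have hb₀ : b ≠ 0 := by rintro rfl; simp at hb
  let g : ℝ → ℂ := fun x => cexp (-Real.pi * b * x ^ 2)
  have hg : Integrable g := by
    have hb' : 0 < (Real.pi * b).re := by simpa using mul_pos Real.pi_pos hb
    simpa [g] using integrable_cexp_neg_mul_sq hb'
  have h_deriv (ξ : ℝ) : HasDerivAt (𝓕 g) (-2 * Real.pi * I * 𝓕 (oddGaussian b) ξ) ξ := by
    have h_smul : (fun x : ℝ => (-2 * Real.pi * I * x) • g x)
        = (-2 * Real.pi * I) • oddGaussian b := by
      ext x
      simp only [g, oddGaussian, Pi.smul_apply, smul_eq_mul, mul_assoc]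
    refine (Real.hasDerivAt_fourier hg (integrable_oddGaussian hb) ξ).congr_deriv ?_
    rw [h_smul]
    simp only [Real.fourier_eq, Pi.smul_apply, Circle.smul_def, smul_eq_mul,
      mul_left_comm _ (-2 * Real.pi * I), integral_const_mul]
  have h_deriv' (ξ : ℝ) : HasDerivAt (𝓕 g)
      (1 / b ^ (1 / 2 : ℂ) * (cexp (-Real.pi / b * ξ ^ 2) * (-Real.pi / b * (2 * ξ)))) ξ := by
    rw [show 𝓕 g = _ from fourier_gaussian_pi hb]
    have h_sq : HasDerivAt (fun z : ℂ => z ^ 2) (2 * ξ) ξ := by simpa using hasDerivAt_pow 2 (ξ : ℂ)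
    exact (((h_sq.const_mul _).cexp.const_mul _).comp_ofReal)
  ext ξ
  have h_eq := (h_deriv ξ).unique (h_deriv' ξ)
  have h_pow : b ^ (-(3 / 2) : ℂ) = 1 / b ^ (1 / 2 : ℂ) / b := by
    rw [show (-(3 / 2) : ℂ) = -(1 / 2) - 1 by ring, cpow_sub _ _ hb₀, cpow_neg, cpow_one,
      one_div (b ^ _)]
  have h_ne : -2 * Real.pi * I ≠ 0 := by simp [Real.pi_ne_zero]
  refine mul_left_cancel₀ h_ne (h_eq.trans ?_)
  rw [h_pow, oddGaussian, ← div_eq_mul_inv]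
  linear_combination (-2 * Real.pi * (1 / b ^ (1 / 2 : ℂ)) / b * ξ *
    cexp (-Real.pi / b * ξ ^ 2)) * I_sq

theorem ofReal_mul_one_div_pi_mul_sq_cpow (a : ℂ) (x : ℝ) :
    x * (1 / ((Real.pi * x ^ 2 : ℝ) : ℂ)) ^ a = Real.pi ^ (-a) * signCpow (1 - 2 * a) x := by
  rcases eq_or_ne x 0 with rfl | hx
  · simp
  have h_sign : x = Real.sign x * |x| := by
    rcases hx.lt_or_gt with h | h
    · simp [Real.sign_of_neg h, abs_of_neg h]
    · simp [Real.sign_of_pos h, abs_of_pos h]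
  have h_abs : ((|x| : ℝ) : ℂ) ≠ 0 := by simpa
  have h_pow : (1 / ((Real.pi * x ^ 2 : ℝ) : ℂ)) ^ a
      = Real.pi ^ (-a) * ((|x| : ℝ) : ℂ) ^ (-2 * a) := by
    have h_nonneg : 0 ≤ Real.pi * x ^ 2 := by positivity
    rw [one_div, inv_cpow _ _ (arg_ofReal_of_nonneg h_nonneg ▸ Real.pi_pos.ne),
      ← sq_abs, ofReal_mul, mul_cpow_ofReal_nonneg Real.pi_nonneg (by positivity), ofReal_pow,
      ← cpow_nat_mul', mul_inv, ← cpow_neg, ← cpow_neg]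
    · push_cast
      ring_nf
    all_goals rw [arg_ofReal_of_nonneg (abs_nonneg _)]; linarith [Real.pi_pos]
  rw [h_pow, signCpow, sub_eq_add_neg, ← neg_mul, cpow_add _ _ h_abs, cpow_one]
  nth_rw 1 [h_sign]
  push_cast
  ring

theorem cpow_smul_oddGaussian (a : ℂ) (x t : ℝ) :
    (t : ℂ) ^ (a - 1) • oddGaussian t x
      = x * ((t : ℂ) ^ (a - 1) * cexp (-(((Real.pi * x ^ 2 : ℝ) : ℂ) * t))) := by
  rw [oddGaussian, smul_eq_mul]
  push_cast
  ring_nf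

theorem hasMellin_oddGaussian {a : ℂ} (ha : 0 < a.re) (x : ℝ) :
    HasMellin (fun t => oddGaussian t x) a (Real.pi ^ (-a) * Gamma a * signCpow (1 - 2 * a) x) := by
  rcases eq_or_ne x 0 with rfl | hx
  · simp [HasMellin, MellinConvergent, mellin, oddGaussian]
  have h_integral : mellin (fun t => oddGaussian t x) a
      = Real.pi ^ (-a) * Gamma a * signCpow (1 - 2 * a) x := by
    simp only [mellin, cpow_smul_oddGaussian]
    rw [integral_const_mul, integral_cpow_mul_exp_neg_mul_Ioi ha (by positivity), ← mul_assoc,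
      ofReal_mul_one_div_pi_mul_sq_cpow]
    ring
  refine ⟨.of_integral_ne_zero (h_integral.trans_ne ?_), h_integral⟩
  have h_sign : signCpow (1 - 2 * a) x ≠ 0 := by
    rw [← norm_ne_zero_iff, norm_signCpow _ hx]
    positivity
  simp [Gamma_ne_zero_of_re_pos ha, h_sign, cpow_eq_zero_iff, Real.pi_ne_zero]

theorem integral_norm_cpow_smul_oddGaussian {a : ℂ} (ha : 0 < a.re) (x : ℝ) :
    ∫ t in Ioi (0 : ℝ), ‖(t : ℂ) ^ (a - 1) • oddGaussian t x‖
      = Real.pi ^ (-a.re) * Real.Gamma a.re * ‖signCpow (1 - 2 * a) x‖ := by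
  have h_norm : ∀ t ∈ Ioi (0 : ℝ), ‖(t : ℂ) ^ (a - 1) • oddGaussian t x‖
      = |x| * (t ^ (a.re - 1) * Real.exp (-(Real.pi * x ^ 2 * t))) := fun t ht => by
    rw [cpow_smul_oddGaussian, norm_mul, norm_mul, norm_cpow_eq_rpow_re_of_pos ht, norm_exp,
      ← ofReal_mul, ← ofReal_neg, ofReal_re, norm_real, Real.norm_eq_abs, sub_re, one_re]
  rw [setIntegral_congr_fun measurableSet_Ioi h_norm, integral_const_mul]
  rcases eq_or_ne x 0 with rfl | hx
  · simp
  have h := congrArg norm (ofReal_mul_one_div_pi_mul_sq_cpow a x)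
  rw [← ofReal_one, ← ofReal_div, norm_mul, norm_mul, norm_cpow_eq_rpow_re_of_pos (by positivity),
    norm_cpow_eq_rpow_re_of_pos Real.pi_pos, norm_real, Real.norm_eq_abs, neg_re] at h
  rw [Real.integral_rpow_mul_exp_neg_mul_Ioi ha (by positivity)]
  linear_combination Real.Gamma a.re * h

theorem integrable_cpow_smul_oddGaussian_smul {f : ℝ → E} (hf : AEStronglyMeasurable f) {a : ℂ}
    (ha : 0 < a.re) (hfa : Integrable fun x => signCpow (1 - 2 * a) x • f x) :
    Integrable (fun p : ℝ × ℝ => ((p.2 : ℂ) ^ (a - 1) • oddGaussian p.2 p.1) • f p.1)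
      (volume.prod (volume.restrict (Ioi 0))) := by
  have h_meas : Measurable fun p : ℝ × ℝ => (p.2 : ℂ) ^ (a - 1) • oddGaussian p.2 p.1 := by
    unfold oddGaussian
    fun_prop
  refine (integrable_prod_iff (h_meas.aestronglyMeasurable.smul hf.comp_fst)).2
    ⟨.of_forall fun x => (hasMellin_oddGaussian ha x).1.smul_const (f x), ?_⟩
  have h_norm (x : ℝ) : ∫ t in Ioi (0 : ℝ), ‖((t : ℂ) ^ (a - 1) • oddGaussian t x) • f x‖
      = Real.pi ^ (-a.re) * Real.Gamma a.re * ‖signCpow (1 - 2 * a) x • f x‖ := by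
    simp_rw [norm_smul _ (f x)]
    rw [integral_mul_const, integral_norm_cpow_smul_oddGaussian ha, mul_assoc]
  exact (hfa.norm.const_mul _).congr (.of_forall fun x => (h_norm x).symm)

/-- The integral of `f` against the odd Gaussians of parameter `t > 0`, an analogue of the odd theta
function: its Mellin transform in `t` is a zeta integral of `f`. -/
def oddGaussianIntegral (f : ℝ → E) (t : ℝ) : E :=
  ∫ x, oddGaussian t x • f x

variable [CompleteSpace E]

theorem oddGaussianIntegral_fourier {f : ℝ → E} (hf : Integrable f) {t : ℝ}
    (ht : 0 < t) :
    oddGaussianIntegral (𝓕 f) t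
      = -I • (t : ℂ) ^ (-(3 / 2) : ℂ) • oddGaussianIntegral f t⁻¹ := by
  simp only [oddGaussianIntegral]
  rw [← integral_fourier_smul_eq_integral_smul_fourier (integrable_oddGaussian (by simpa)) hf,
    fourier_oddGaussian (by simpa), smul_smul, ← integral_smul]
  simp only [ofReal_inv, smul_smul]

theorem mellin_oddGaussianIntegral_fourier {f : ℝ → E} (hf : Integrable f)
    (a : ℂ) :
    mellin (oddGaussianIntegral (𝓕 f)) a = -I • mellin (oddGaussianIntegral f) (3 / 2 - a) := by
  calc mellin (oddGaussianIntegral (𝓕 f)) a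
      = mellin (fun t => -I • (t : ℂ) ^ (-(3 / 2) : ℂ) • oddGaussianIntegral f t⁻¹) a :=
        setIntegral_congr_fun measurableSet_Ioi fun t ht => by
          simp only [oddGaussianIntegral_fourier hf ht]
    _ = -I • mellin (oddGaussianIntegral f) (3 / 2 - a) := by
        rw [mellin_const_smul, mellin_cpow_smul, mellin_comp_inv]
        ring_nf

theorem mellin_oddGaussianIntegral {f : ℝ → E} (hf : AEStronglyMeasurable f) {a : ℂ}
    (ha : 0 < a.re) (hfa : Integrable fun x => signCpow (1 - 2 * a) x • f x) :
    mellin (oddGaussianIntegral f) a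
      = (Real.pi ^ (-a) * Gamma a) • ∫ x, signCpow (1 - 2 * a) x • f x := by
  calc mellin (oddGaussianIntegral f) a
      = ∫ t in Ioi (0 : ℝ), ∫ x, ((t : ℂ) ^ (a - 1) • oddGaussian t x) • f x := by
        simp only [mellin, oddGaussianIntegral, ← integral_smul, smul_assoc]
    _ = ∫ x, ∫ t in Ioi (0 : ℝ), ((t : ℂ) ^ (a - 1) • oddGaussian t x) • f x :=
        (integral_integral_swap (integrable_cpow_smul_oddGaussian_smul hf ha hfa)).symm
    _ = ∫ x, mellin (fun t => oddGaussian t x) a • f x := by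
        simp only [integral_smul_const, mellin]
    _ = _ := by
        simp only [(hasMellin_oddGaussian ha _).2, mul_smul _ (signCpow _ _), integral_smul]

theorem integral_signCpow_smul_fourier {f : ℝ → E} {s : ℂ} (hf : Integrable f)
    (h₁ : -2 < s.re) (h₂ : s.re < 1) (h𝓕fs : Integrable fun ξ => signCpow s ξ • 𝓕 f ξ)
    (hfs : Integrable fun x => signCpow (-s - 1) x • f x) :
    ∫ ξ, signCpow s ξ • 𝓕 f ξ
      = (-I * Real.pi ^ (-s - 1 / 2) * (Gamma (s / 2 + 1) / Gamma ((1 - s) / 2))) •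
        ∫ x, signCpow (-s - 1) x • f x := by
  have hs_left : 1 - 2 * ((1 - s) / 2) = s := by ring
  have hs_right : 1 - 2 * (s / 2 + 1) = -s - 1 := by ring
  have h_re_left : 0 < ((1 - s) / 2).re := by simpa using by linarith
  have h_re_right : 0 < (s / 2 + 1).re := by simpa using by linarith
  have h_mellin := mellin_oddGaussianIntegral_fourier hf ((1 - s) / 2)
  rw [show 3 / 2 - (1 - s) / 2 = s / 2 + 1 by ring,
    mellin_oddGaussianIntegral (memLp_top_fourier hf).1 h_re_left (by rwa [hs_left]),
    mellin_oddGaussianIntegral hf.1 h_re_right (by rwa [hs_right]), hs_left, hs_right,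
    smul_smul] at h_mellin
  have hπ : (Real.pi : ℂ) ≠ 0 := ofReal_ne_zero.2 Real.pi_ne_zero
  have h_pow : (Real.pi : ℂ) ^ (-(s / 2 + 1))
      = Real.pi ^ (-((1 - s) / 2)) * Real.pi ^ (-s - 1 / 2) := by
    rw [← cpow_add _ _ hπ]
    ring_nf
  have h_pow_ne : (Real.pi : ℂ) ^ (-((1 - s) / 2)) ≠ 0 := by simp [cpow_eq_zero_iff, hπ]
  have h_Gamma : Gamma ((1 - s) / 2) ≠ 0 := Gamma_ne_zero_of_re_pos h_re_left
  refine smul_right_injective E (mul_ne_zero h_pow_ne h_Gamma) ?_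
  simp only [h_mellin, smul_smul, h_pow]
  field_simp

theorem zeta_functional_equation_sign_dim_one_general {f : ℝ → E}
    (hf : Integrable f) (h𝓕f : Integrable (𝓕 f)) {s : ℂ} (h₁ : -1 < s.re) (h₂ : s.re < 0) :
    (Integrable fun ξ => signCpow s ξ • 𝓕 f ξ)
    ∧ (Integrable fun x => signCpow (-s - 1) x • f x)
    ∧ ∫ ξ, signCpow s ξ • 𝓕 f ξ
      = (-I * Real.pi ^ (-s - 1 / 2) * (Gamma (s / 2 + 1) / Gamma ((1 - s) / 2))) •
        ∫ x, signCpow (-s - 1) x • f x := by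
  have h𝓕fs := integrable_signCpow_smul h𝓕f (memLp_top_fourier hf) h₁ h₂.le
  have hfs : Integrable fun x => signCpow (-s - 1) x • f x :=
    integrable_signCpow_smul hf (memLp_top_of_integrable_fourier hf h𝓕f)
      (by simpa using h₂) (by simpa using by linarith)
  exact ⟨h𝓕fs, hfs, integral_signCpow_smul_fourier hf (by linarith) (by linarith) h𝓕fs hfs⟩

end Zeta

theorem fourierTr_eq_fourier (f : ℝ → ℂ) : fourierTr f = 𝓕 f := by
  ext ξ
  rw [Real.fourier_real_eq_integral_exp_smul, fourierTr]
  congr! 3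
  push_cast
  ring_nf

/-- Local zeta functional equation for the sign character in dimension one:
for a Schwartz function `f` and `−1 < Re s < 0`, both zeta integrals converge
absolutely and
`∫ 𝓕f(ξ) sign(ξ)|ξ|^s dξ = −i π^{−s−1/2} (Γ(s/2+1)/Γ((1−s)/2)) ∫ f(x) sign(x)|x|^{−s−1} dx`. -/
theorem zeta_functional_equation_sign_dim_one
    (f : SchwartzMap ℝ ℂ) (s : ℂ) (h₁ : (-1 : ℝ) < s.re) (h₂ : s.re < 0) :
    Integrable (fun ξ : ℝ =>
        fourierTr (fun x => f x) ξ * (Real.sign ξ : ℂ) * (((|ξ| : ℝ) : ℂ) ^ s))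
    ∧ Integrable (fun x : ℝ => f x * (Real.sign x : ℂ) * (((|x| : ℝ) : ℂ) ^ (-s - 1)))
    ∧ (∫ ξ : ℝ, fourierTr (fun x => f x) ξ * (Real.sign ξ : ℂ) * (((|ξ| : ℝ) : ℂ) ^ s))
      = -Complex.I * (Real.pi : ℂ) ^ (-s - 1 / 2)
          * (Complex.Gamma (s / 2 + 1) / Complex.Gamma ((1 - s) / 2))
          * ∫ x : ℝ, f x * (Real.sign x : ℂ) * (((|x| : ℝ) : ℂ) ^ (-s - 1)) := by
  simpa only [fourierTr_eq_fourier, signCpow, smul_eq_mul, mul_comm, mul_assoc, mul_left_comm]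
    using zeta_functional_equation_sign_dim_one_general f.integrable
      (by simpa only [SchwartzMap.fourier_coe] using (𝓕 f).integrable) h₁ h₂
end
end
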